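/- arXiv:math/0101026 — 5 statements merged into one kernel-verified Lean document; each statement's English description precedes it below -/
import Mathlib

section
/- Let G be a group acting on ℝ by orientation-preserving homeomorphisms such that the action is minimal (every orbit is dense in ℝ). Then at least one of the following holds: (i) for any two nondegenerate compact intervals I, J ⊆ ℝ there exists g ∈ G with g(I) ⊆ J; or (ii) there is an orientation-preserving homeomorphism h : ℝ → ℝ such that for every g ∈ G the conjugate h ∘ g ∘ h⁻¹ commutes with the unit translation x ↦ x + 1 (i.e. G is conjugate in Homeo(ℝ) to a group of lifts of circle homeomorphisms). [This is the real-line instance of the paper's dichotomy theorem for minimal group actions on simply connected one-manifolds with one-sided branching.] -/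
/-!
Suppose no element of `G` maps `[a, b]` into `[c, d]`, and let `T x` be the supremum of the right
endpoints of the translates of `[c, d]` whose left endpoint is at most `x`. The supremum is finite:
if `x < g a`, such a translate cannot reach beyond `g b`, since otherwise it would contain
`g [a, b]`. By construction `T` is monotone, commutes with `G` and has no fixed point.
Minimality makes it a homeomorphism: its range contains an orbit, so it is dense, and an interval
on which `T` is constant would have translates covering the line. Straightening `T` to the unit
translation conjugates `G` into the centralizer of that translation.
-/

open Set Function

section EquivariantMaps

variable {X ι : Type*} [TopologicalSpace X] {T : X → X}

theorem denseRange_of_commute {φ : ι → X → X} {x : X} (hφ : DenseRange fun i => φ i (T x))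
    (hT : ∀ i, Function.Commute (φ i) T) : DenseRange T :=
  hφ.mono <| range_subset_iff.2 fun i => ⟨φ i x, ((hT i).eq x).symm⟩

variable [LinearOrder X] [OrderTopology X]

theorem surjective_of_monotone_of_denseRange {Y : Type*} [TopologicalSpace Y] [LinearOrder Y]
    [OrderTopology Y] [DenselyOrdered Y] [NoMinOrder Y] [NoMaxOrder Y] [PreconnectedSpace X]
    {f : X → Y} (hmono : Monotone f) (hdense : DenseRange f) : Surjective f := fun y => by
  obtain ⟨x, hx⟩ := hdense.exists_mem_open isOpen_Iio (nonempty_Iio (a := y))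
  obtain ⟨z, hz⟩ := hdense.exists_mem_open isOpen_Ioi (nonempty_Ioi (a := y))
  exact mem_range_of_exists_le_of_exists_ge (hmono.continuous_of_denseRange hdense)
    ⟨x, hx.le⟩ ⟨z, hz.le⟩

variable [DenselyOrdered X]

theorem isLocallyConstant_of_commute {φ : ι → X ≃o X} (hφ : ∀ x, DenseRange fun i => φ i x)
    (hT : ∀ i, Function.Commute (φ i) T) (hmono : Monotone T) {p q : X} (hpq : p < q)
    (h : T p = T q) : IsLocallyConstant T := by
  have hconst : ∀ z ∈ Ioo p q, T z = T p := fun z hz =>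
    le_antisymm ((hmono hz.2.le).trans h.ge) (hmono hz.1.le)
  refine (IsLocallyConstant.iff_exists_open T).2 fun x => ?_
  obtain ⟨i, hi⟩ := (hφ x).exists_mem_open isOpen_Ioo (nonempty_Ioo.2 hpq)
  refine ⟨φ i ⁻¹' Ioo p q, isOpen_Ioo.preimage (φ i).continuous, hi, fun y hy => ?_⟩
  apply (φ i).injective
  rw [hT i y, hT i x, hconst _ hy, hconst _ hi]

theorem bijective_of_monotone_of_commute [PreconnectedSpace X] [NoMinOrder X] [NoMaxOrder X]
    {φ : ι → X ≃o X} (hφ : ∀ x, DenseRange fun i => φ i x) (hT : ∀ i, Function.Commute (φ i) T)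
    (hmono : Monotone T) : Bijective T := by
  rcases isEmpty_or_nonempty X with _ | ⟨⟨x⟩⟩
  · exact ⟨injective_of_subsingleton T, fun y => isEmptyElim y⟩
  have hsurj := surjective_of_monotone_of_denseRange hmono (denseRange_of_commute (hφ (T x)) hT)
  refine ⟨Function.Injective.of_lt_imp_ne fun p q hpq h => ?_, hsurj⟩
  obtain ⟨y, hy⟩ := exists_gt (T p)
  obtain ⟨z, rfl⟩ := hsurj y
  exact hy.ne ((isLocallyConstant_of_commute hφ hT hmono hpq h).apply_eq_of_preconnectedSpace p z)

end EquivariantMaps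

section ReachSet

variable {X G : Type*} [Group G] {a b c d x y : X}

/-- The right endpoints of the translates of `[c, d]` whose left endpoint is at most `x`; this set
depends on `x` equivariantly. -/
def reachSet [LE X] (ρ : G →* (X ≃o X)) (c d x : X) : Set X := {y | ∃ g, ρ g c ≤ x ∧ ρ g d = y}

theorem reachSet_mono [Preorder X] {ρ : G →* (X ≃o X)} (h : x ≤ y) :
    reachSet ρ c d x ⊆ reachSet ρ c d y :=
  fun _ ⟨g, hg, hgd⟩ => ⟨g, hg.trans h, hgd⟩

theorem image_reachSet_subset [LE X] (ρ : G →* (X ≃o X)) (g : G) :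
    ρ g '' reachSet ρ c d x ⊆ reachSet ρ c d (ρ g x) := by
  rintro _ ⟨_, ⟨f, hf, rfl⟩, rfl⟩
  exact ⟨g * f, by simpa using hf, by simp⟩

theorem image_reachSet [LE X] (ρ : G →* (X ≃o X)) (g : G) :
    ρ g '' reachSet ρ c d x = reachSet ρ c d (ρ g x) := by
  refine (image_reachSet_subset ρ g).antisymm fun y hy => ⟨ρ g⁻¹ y, ?_, by simp⟩
  simpa using image_reachSet_subset ρ g⁻¹ (mem_image_of_mem _ hy)

variable [LinearOrder X] [TopologicalSpace X] [OrderTopology X] {ρ : G →* (X ≃o X)}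

theorem exists_lt_mem_reachSet [DenselyOrdered X] (hx : DenseRange fun g => ρ g x) (hcd : c < d) :
    ∃ y ∈ reachSet ρ c d x, x < y := by
  obtain ⟨g, hg⟩ := hx.exists_mem_open isOpen_Ioo (nonempty_Ioo.2 hcd)
  refine ⟨ρ g⁻¹ d, ⟨g⁻¹, (ρ g).le_iff_le.1 ?_, rfl⟩, (ρ g).lt_iff_lt.1 ?_⟩
  · simpa using hg.1.le
  · simpa using hg.2

theorem reachSet_nonempty [DenselyOrdered X] (hx : DenseRange fun g => ρ g x) (hcd : c < d) :
    (reachSet ρ c d x).Nonempty :=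
  (exists_lt_mem_reachSet hx hcd).imp fun _ hy => hy.1

theorem bddAbove_reachSet [NoMaxOrder X] (ha : DenseRange fun g => ρ g a)
    (h : ∀ g, ¬ ρ g '' Icc a b ⊆ Icc c d) (x : X) : BddAbove (reachSet ρ c d x) := by
  obtain ⟨k, hk⟩ := ha.exists_mem_open isOpen_Ioi (nonempty_Ioi (a := x))
  refine ⟨ρ k b, ?_⟩
  rintro _ ⟨g, hgx, rfl⟩
  by_contra! hlt
  have hc : c ≤ ρ (g⁻¹ * k) a :=
    (ρ g).le_iff_le.1 (by simpa using hgx.trans (mem_Ioi.1 hk).le)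
  have hd : ρ (g⁻¹ * k) b ≤ d := (ρ g).le_iff_le.1 (by simpa using hlt.le)
  apply h (g⁻¹ * k)
  rw [OrderIso.image_Icc]
  exact Icc_subset_Icc hc hd

end ReachSet

section Reach

variable {X G : Type*} [ConditionallyCompleteLinearOrder X] [Group G] {c d x : X}

/-- How far to the right the translates of `[c, d]` starting at or before `x` extend, the candidate
for a homeomorphism commuting with the action; junk if these are unbounded or if there are none. -/
noncomputable def reach (ρ : G →* (X ≃o X)) (c d x : X) : X := sSup (reachSet ρ c d x)

variable [TopologicalSpace X] [OrderTopology X] [DenselyOrdered X] {ρ : G →* (X ≃o X)}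

theorem lt_reach (hx : DenseRange fun g => ρ g x) (hbdd : BddAbove (reachSet ρ c d x))
    (hcd : c < d) : x < reach ρ c d x :=
  let ⟨_, hy, hxy⟩ := exists_lt_mem_reachSet hx hcd
  hxy.trans_le (le_csSup hbdd hy)

theorem monotone_reach (hρ : ∀ x, DenseRange fun g => ρ g x)
    (hbdd : ∀ x, BddAbove (reachSet ρ c d x)) (hcd : c < d) : Monotone (reach ρ c d) :=
  fun _ _ h => csSup_le_csSup (hbdd _) (reachSet_nonempty (hρ _) hcd) (reachSet_mono h)

theorem commute_reach (hρ : ∀ x, DenseRange fun g => ρ g x)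
    (hbdd : ∀ x, BddAbove (reachSet ρ c d x)) (hcd : c < d) (g : G) :
    Function.Commute (ρ g) (reach ρ c d) := fun x => by
  rw [reach, reach, (ρ g).map_csSup' (reachSet_nonempty (hρ x) hcd) (hbdd x), image_reachSet]

end Reach

section Iterates

variable {X : Type*}

theorem zpow_add_one_apply [LE X] (T : X ≃o X) (n : ℤ) (x : X) :
    (T ^ (n + 1)) x = T ((T ^ n) x) := by
  rw [add_comm, zpow_one_add, RelIso.mul_apply]

theorem strictMono_zpow_apply [Preorder X] {T : X ≃o X} (hT : ∀ x, x < T x) (x : X) :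
    StrictMono fun n : ℤ => (T ^ n) x :=
  strictMono_int_of_lt_succ fun n => by
    rw [zpow_add_one_apply]
    exact hT _

variable [ConditionallyCompleteLinearOrder X] {T : X ≃o X}

theorem not_bddAbove_range_zpow_apply (hT : ∀ x, x < T x) (x : X) :
    ¬ BddAbove (range fun n : ℤ => (T ^ n) x) := fun hbdd => by
  obtain ⟨_, ⟨n, rfl⟩, hn⟩ := exists_lt_of_lt_csSup (range_nonempty _)
    ((OrderIso.symm_apply_lt T).2 (hT (sSup (range fun n : ℤ => (T ^ n) x))))
  rw [OrderIso.symm_apply_lt, ← zpow_add_one_apply] at hn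
  exact hn.not_ge (le_csSup hbdd ⟨n + 1, rfl⟩)

theorem not_bddBelow_range_zpow_apply (hT : ∀ x, x < T x) (x : X) :
    ¬ BddBelow (range fun n : ℤ => (T ^ n) x) := fun hbdd => by
  obtain ⟨_, ⟨n, rfl⟩, hn⟩ := exists_lt_of_csInf_lt (range_nonempty _)
    (hT (sInf (range fun n : ℤ => (T ^ n) x)))
  have hle := csInf_le hbdd ⟨n - 1, rfl⟩
  rw [← T.le_iff_le, ← zpow_add_one_apply, sub_add_cancel] at hle
  exact hn.not_ge hle

theorem exists_zpow_apply_le_lt_zpow_add_one_apply (hT : ∀ x, x < T x) (x y : X) :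
    ∃ n : ℤ, (T ^ n) x ≤ y ∧ y < (T ^ (n + 1)) x := by
  obtain ⟨_, ⟨N, rfl⟩, hN⟩ := not_bddAbove_iff.1 (not_bddAbove_range_zpow_apply hT x) y
  obtain ⟨_, ⟨m, rfl⟩, hm⟩ := not_bddBelow_iff.1 (not_bddBelow_range_zpow_apply hT x) y
  obtain ⟨n, hn, hmax⟩ := Int.exists_greatest_of_bdd (P := fun n => (T ^ n) x ≤ y)
    ⟨N, fun k hk => ((strictMono_zpow_apply hT x).lt_iff_lt.1 (hk.trans_lt hN)).le⟩ ⟨m, hm.le⟩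
  exact ⟨n, hn, not_le.1 fun h => (lt_add_one n).not_ge (hmax _ h)⟩

end Iterates

section Straightening

variable {T : ℝ ≃o ℝ}

/-- The map conjugating the unit translation to `T`: linear from `[0, 1)` to `[0, T 0)`, and
extended to `ℝ` by equivariance. -/
noncomputable def straightening (T : ℝ ≃o ℝ) (t : ℝ) : ℝ := (T ^ ⌊t⌋) (Int.fract t * T 0)

theorem straightening_add_one (T : ℝ ≃o ℝ) (t : ℝ) :
    straightening T (t + 1) = T (straightening T t) := by
  rw [straightening, straightening, Int.floor_add_one, Int.fract_add_one, zpow_add_one_apply]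

theorem straightening_intCast_add (T : ℝ ≃o ℝ) (n : ℤ) {s : ℝ} (hs : s ∈ Ico 0 1) :
    straightening T (n + s) = (T ^ n) (s * T 0) := by
  rw [straightening, Int.floor_intCast_add, Int.fract_intCast_add, Int.fract_eq_self.2 hs,
    Int.floor_eq_zero_iff.2 hs, add_zero]

theorem zpow_floor_apply_zero_le_straightening (h0 : 0 ≤ T 0) (t : ℝ) :
    (T ^ ⌊t⌋) 0 ≤ straightening T t :=
  (T ^ ⌊t⌋).monotone (mul_nonneg (Int.fract_nonneg t) h0)

theorem straightening_lt_zpow_floor_add_one_apply_zero (h0 : 0 < T 0) (t : ℝ) :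
    straightening T t < (T ^ (⌊t⌋ + 1)) 0 := by
  rw [zpow_add_one, RelIso.mul_apply]
  exact (T ^ ⌊t⌋).strictMono (mul_lt_of_lt_one_left h0 (Int.fract_lt_one t))

theorem strictMono_straightening (hT : ∀ x, x < T x) : StrictMono (straightening T) := by
  intro s t hst
  rcases (Int.floor_mono hst.le).eq_or_lt with h | h
  · have hfract : Int.fract s < Int.fract t := by
      rw [Int.fract, Int.fract, h]
      exact sub_lt_sub_right hst _
    rw [straightening, straightening, h]
    exact (T ^ ⌊t⌋).strictMono (mul_lt_mul_of_pos_right hfract (hT 0))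
  · calc
      straightening T s < (T ^ (⌊s⌋ + 1)) 0 :=
        straightening_lt_zpow_floor_add_one_apply_zero (hT 0) s
      _ ≤ (T ^ ⌊t⌋) 0 := (strictMono_zpow_apply hT 0).monotone h
      _ ≤ straightening T t := zpow_floor_apply_zero_le_straightening (hT 0).le t

theorem surjective_straightening (hT : ∀ x, x < T x) : Surjective (straightening T) := by
  intro x
  obtain ⟨n, hn, hn'⟩ := exists_zpow_apply_le_lt_zpow_add_one_apply hT 0 x
  obtain ⟨y, rfl⟩ := (T ^ n).surjective x
  rw [zpow_add_one, RelIso.mul_apply, OrderIso.lt_iff_lt] at hn'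
  rw [OrderIso.le_iff_le] at hn
  refine ⟨n + y / T 0, ?_⟩
  rw [straightening_intCast_add T n ⟨div_nonneg hn (hT 0).le, (div_lt_one (hT 0)).2 hn'⟩,
    div_mul_cancel₀ _ (hT 0).ne']

theorem exists_orderIso_semiconj_add_one (hT : ∀ x, x < T x) :
    ∃ k : ℝ ≃o ℝ, Semiconj k (· + 1) T :=
  ⟨(strictMono_straightening hT).orderIsoOfSurjective _ (surjective_straightening hT),
    straightening_add_one T⟩

theorem exists_conj_add_one {ι : Type*} {φ : ι → ℝ ≃o ℝ} (hT : ∀ x, x < T x)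
    (hcomm : ∀ i, Function.Commute (φ i) T) :
    ∃ h : ℝ ≃o ℝ, ∀ i x, h (φ i (h.symm (x + 1))) = h (φ i (h.symm x)) + 1 := by
  obtain ⟨k, hk⟩ := exists_orderIso_semiconj_add_one hT
  refine ⟨k.symm, fun i x => ?_⟩
  calc
    k.symm (φ i (k (x + 1))) = k.symm (T (φ i (k x))) := by rw [hk x, hcomm i]
    _ = k.symm (φ i (k x)) + 1 := by
      rw [OrderIso.symm_apply_eq, hk, OrderIso.apply_symm_apply]

end Straightening

theorem minimal_action_dichotomy_general {X G : Type*}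
    [ConditionallyCompleteLinearOrder X] [TopologicalSpace X] [OrderTopology X] [DenselyOrdered X]
    [NoMinOrder X] [NoMaxOrder X] [Group G] (ρ : G →* (X ≃o X))
    (hρ : ∀ x, DenseRange fun g => ρ g x) :
    (∀ a b c d : X, c < d → ∃ g, ρ g '' Icc a b ⊆ Icc c d) ∨
      ∃ T : X ≃o X, (∀ x, x < T x) ∧ ∀ g, Function.Commute (ρ g) T := by
  refine or_iff_not_imp_left.2 fun hnot => ?_
  push Not at hnot
  obtain ⟨a, b, c, d, hcd, h⟩ := hnot
  have hbdd := bddAbove_reachSet (hρ a) h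
  have hmono := monotone_reach hρ hbdd hcd
  have hcomm := commute_reach hρ hbdd hcd
  have hbij := bijective_of_monotone_of_commute hρ hcomm hmono
  exact ⟨(hmono.strictMono_of_injective hbij.1).orderIsoOfSurjective _ hbij.2,
    fun x => lt_reach (hρ x) (hbdd x) hcd, hcomm⟩

/-- **Dichotomy for minimal actions on ℝ** (real-line instance of the paper's
`action_dichotomy` theorem for one-manifolds with one-sided branching).

Let `G` act on `ℝ` by orientation-preserving homeomorphisms (order isomorphisms of `ℝ`),
with every orbit dense.  Then either
(i) any nondegenerate compact interval can be mapped into any other by some element of `G`, or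
(ii) the action is conjugate, by an orientation-preserving homeomorphism `h` of `ℝ`, to a group
of homeomorphisms commuting with the unit translation `x ↦ x + 1`
(i.e. a group of lifts of circle homeomorphisms). -/
theorem minimal_action_dichotomy {G : Type*} [Group G] (ρ : G →* (ℝ ≃o ℝ))
    (hmin : ∀ x : ℝ, Dense (Set.range fun g : G => ρ g x)) :
    (∀ a b c d : ℝ, a < b → c < d →
        ∃ g : G, (ρ g) '' Set.Icc a b ⊆ Set.Icc c d) ∨
    (∃ h : ℝ ≃o ℝ, ∀ (g : G) (x : ℝ),
        h (ρ g (h.symm (x + 1))) = h (ρ g (h.symm x)) + 1) := by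
  exact (minimal_action_dichotomy_general ρ hmin).imp (fun h a b c d _ => h a b c d)
    fun ⟨_, hT, hcomm⟩ => exists_conj_add_one hT hcomm
end

section
/- Let G be a group acting minimally on ℝ by orientation-preserving homeomorphisms, and suppose there is a nondegenerate compact interval [a,b] (a < b) which is incompressible, meaning no g ∈ G satisfies g([a,b]) ⊊ [a,b]. Then for every p ∈ ℝ the set {g(b) : g ∈ G, g(a) ≤ p} is nonempty and bounded above, so Z(p) := sup{g(b) : g ∈ G, g(a) ≤ p} is well-defined, and Z has the following properties: (1) Z(g(a)) = g(b) for every g ∈ G; (2) Z is strictly increasing and continuous; (3) Z(p) > p for every p ∈ ℝ; (4) Z commutes with the action: Z(g(p)) = g(Z(p)) for all g ∈ G and p ∈ ℝ; (5) the iterates of Z escape to +∞: for every y, x ∈ ℝ there is n ∈ ℕ with Zⁿ(y) ≥ x. -/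
/-!
Nested translates of an incompressible interval `[a, b]` coincide, so `g a ↦ g b` is an order
isomorphism between the orbits of `a` and `b`. Both orbits are dense, so it extends by suprema to a
strictly increasing continuous map `Z` of the line, which commutes with the action because it does
so on the orbit of `a`. The translates of `[a, b)` cover the line, and `g a ≤ p < g b` gives
`p < g b = Z (g a) ≤ Z p`. Hence `Z` has no fixed point, whereas a bounded increasing sequence of
iterates would converge to one.
-/

section SupExtension

variable {ι α β : Type*} {u : ι → α} {v : ι → β}

/-- The extension by suprema of the correspondence `u i ↦ v i`: its value at `p` is the supremum of
all `v i` with `u i ≤ p`, a junk value unless these are nonempty and bounded above. -/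
noncomputable def supExtension [LE α] [SupSet β] (u : ι → α) (v : ι → β) (p : α) : β :=
  sSup (v '' {i | u i ≤ p})

theorem mem_upperBounds_image_setOf_le [Preorder α] [Preorder β]
    (huv : ∀ i j, u i ≤ u j → v i ≤ v j) {p : α} {i : ι} (hi : p ≤ u i) :
    v i ∈ upperBounds (v '' {j | u j ≤ p}) := by
  rintro _ ⟨j, hj, rfl⟩
  exact huv j i (le_trans hj hi)

theorem supExtension_apply [Preorder α] [ConditionallyCompleteLattice β]
    (huv : ∀ i j, u i ≤ u j → v i ≤ v j) (i : ι) : supExtension u v (u i) = v i :=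
  IsGreatest.csSup_eq
    ⟨Set.mem_image_of_mem v le_rfl, mem_upperBounds_image_setOf_le huv le_rfl⟩

variable [LinearOrder α] [TopologicalSpace α]

theorem image_setOf_le_nonempty [OrderClosedTopology α] [NoMinOrder α] (hu : DenseRange u)
    (v : ι → β) (p : α) : (v '' {i | u i ≤ p}).Nonempty := by
  obtain ⟨_, ⟨i, rfl⟩, hi⟩ := hu.exists_le p
  exact ⟨v i, i, hi, rfl⟩

theorem bddAbove_image_setOf_le [OrderClosedTopology α] [NoMaxOrder α] [Preorder β]
    (hu : DenseRange u) (huv : ∀ i j, u i ≤ u j → v i ≤ v j) (p : α) :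
    BddAbove (v '' {i | u i ≤ p}) := by
  obtain ⟨_, ⟨i, rfl⟩, hi⟩ := hu.exists_ge p
  exact ⟨v i, mem_upperBounds_image_setOf_le huv hi⟩

theorem le_supExtension [OrderClosedTopology α] [NoMaxOrder α] [ConditionallyCompleteLattice β]
    (hu : DenseRange u) (huv : ∀ i j, u i ≤ u j → v i ≤ v j) {p : α} {i : ι} (hi : u i ≤ p) :
    v i ≤ supExtension u v p :=
  le_csSup (bddAbove_image_setOf_le hu huv p) ⟨i, hi, rfl⟩

theorem supExtension_le [OrderClosedTopology α] [NoMinOrder α] [ConditionallyCompleteLattice β]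
    (hu : DenseRange u) (huv : ∀ i j, u i ≤ u j → v i ≤ v j) {p : α} {i : ι} (hi : p ≤ u i) :
    supExtension u v p ≤ v i :=
  csSup_le (image_setOf_le_nonempty hu v p) (mem_upperBounds_image_setOf_le huv hi)

variable [NoMinOrder α] [NoMaxOrder α]

theorem monotone_supExtension [OrderClosedTopology α] [ConditionallyCompleteLattice β]
    (hu : DenseRange u) (huv : ∀ i j, u i ≤ u j → v i ≤ v j) : Monotone (supExtension u v) :=
  fun p q hpq => csSup_le_csSup (bddAbove_image_setOf_le hu huv q) (image_setOf_le_nonempty hu v p)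
    (Set.image_mono fun _ hi => le_trans hi hpq)

theorem continuous_supExtension [OrderTopology α] [ConditionallyCompleteLinearOrder β]
    [TopologicalSpace β] [OrderTopology β] [DenselyOrdered β] (hu : DenseRange u)
    (hv : DenseRange v) (huv : ∀ i j, u i ≤ u j → v i ≤ v j) : Continuous (supExtension u v) := by
  refine (monotone_supExtension hu huv).continuous_of_denseRange (hv.mono ?_)
  rintro _ ⟨i, rfl⟩
  exact ⟨u i, supExtension_apply huv i⟩

theorem strictMono_supExtension [OrderClosedTopology α] [DenselyOrdered α]
    [ConditionallyCompleteLattice β] (hu : DenseRange u) (huv : ∀ i j, u i ≤ u j ↔ v i ≤ v j) :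
    StrictMono (supExtension u v) := by
  intro p q hpq
  obtain ⟨_, ⟨j, rfl⟩, hpj, hjq⟩ := hu.exists_between hpq
  obtain ⟨_, ⟨i, rfl⟩, hpi, hij⟩ := hu.exists_between hpj
  have hle (i j : ι) : u i ≤ u j → v i ≤ v j := (huv i j).1
  calc
    supExtension u v p ≤ v i := supExtension_le hu hle hpi.le
    _ < v j := (lt_iff_lt_of_le_iff_le' (huv j i) (huv i j)).1 hij
    _ ≤ supExtension u v q := le_supExtension hu hle hjq.le

end SupExtension

theorem exists_le_iterate_of_forall_lt {X : Type*} [ConditionallyCompleteLinearOrder X]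
    [TopologicalSpace X] [OrderTopology X] {f : X → X} (hf : Continuous f) (hlt : ∀ p, p < f p)
    (y x : X) : ∃ n : ℕ, x ≤ f^[n] y := by
  by_contra! hbdd
  have hmono : Monotone fun n : ℕ => f^[n] y := monotone_nat_of_le_succ fun n => by
    rw [Function.iterate_succ_apply']
    exact (hlt _).le
  have hlim := tendsto_atTop_ciSup hmono ⟨x, Set.forall_mem_range.2 fun n => (hbdd n).le⟩
  exact (hlt _).ne' (isFixedPt_of_tendsto_iterate hlim hf.continuousAt)

section Action

variable {G X : Type*} [Group G]

theorem map_inv_apply_eq_symm [LE X] (ρ : G →* (X ≃o X)) (g : G) (x : X) :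
    ρ g⁻¹ x = (ρ g).symm x := by
  rw [map_inv]
  rfl

/-- The interval `[a, b]` is incompressible under the action `ρ`: no element of the group maps it
onto a proper subset of itself. -/
def IsIncompressible [Preorder X] (ρ : G →* (X ≃o X)) (a b : X) : Prop :=
  ∀ g : G, ¬ρ g '' Set.Icc a b ⊂ Set.Icc a b

theorem IsIncompressible.eq_of_nested [PartialOrder X] {ρ : G →* (X ≃o X)} {a b : X}
    (hinc : IsIncompressible ρ a b) (hab : a ≤ b) {g h : G} (ha : ρ h a ≤ ρ g a)
    (hb : ρ g b ≤ ρ h b) : ρ h a = ρ g a ∧ ρ g b = ρ h b := by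
  have hcomp (x : X) : ρ (h⁻¹ * g) x = (ρ h).symm (ρ g x) := by
    rw [map_mul, RelIso.mul_apply, map_inv_apply_eq_symm]
  have himage : ρ (h⁻¹ * g) '' Set.Icc a b = Set.Icc ((ρ h).symm (ρ g a)) ((ρ h).symm (ρ g b)) := by
    rw [OrderIso.image_Icc, hcomp, hcomp]
  have hsub : ρ (h⁻¹ * g) '' Set.Icc a b ⊆ Set.Icc a b := by
    rw [himage]
    exact Set.Icc_subset_Icc ((ρ h).le_symm_apply.2 ha) ((ρ h).symm_apply_le.2 hb)
  have heq := eq_of_subset_of_not_ssubset hsub (hinc _)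
  rw [himage, eq_comm, Set.Icc_eq_Icc_iff hab] at heq
  exact ⟨(ρ h).eq_symm_apply.1 heq.1, ((ρ h).eq_symm_apply.1 heq.2).symm⟩

theorem IsIncompressible.apply_le_apply_iff [LinearOrder X] {ρ : G →* (X ≃o X)} {a b : X}
    (hinc : IsIncompressible ρ a b) (hab : a ≤ b) (g h : G) :
    ρ g a ≤ ρ h a ↔ ρ g b ≤ ρ h b := by
  constructor
  · intro ha
    by_contra! hb
    exact hb.ne (hinc.eq_of_nested hab ha hb.le).2
  · intro hb
    by_contra! ha
    exact ha.ne (hinc.eq_of_nested hab ha.le hb).1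

theorem exists_mem_Ico_of_denseRange [LinearOrder X] [TopologicalSpace X] [OrderClosedTopology X]
    [DenselyOrdered X] {ρ : G →* (X ≃o X)} {a b p : X} (hp : DenseRange fun g : G => ρ g p)
    (hab : a < b) : ∃ g : G, p ∈ Set.Ico (ρ g a) (ρ g b) := by
  obtain ⟨_, ⟨g, rfl⟩, ha, hb⟩ := hp.exists_between hab
  refine ⟨g⁻¹, ?_⟩
  rw [map_inv_apply_eq_symm, map_inv_apply_eq_symm]
  exact ⟨(ρ g).symm_apply_le.2 ha.le, (ρ g).lt_symm_apply.2 hb⟩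

theorem map_apply_of_denseRange [Preorder X] [TopologicalSpace X] [OrderTopology X] [T2Space X]
    {ρ : G →* (X ≃o X)} {a b : X} {f : X → X} (hf : Continuous f)
    (ha : DenseRange fun g : G => ρ g a) (hfa : ∀ g, f (ρ g a) = ρ g b) (g : G) (p : X) :
    f (ρ g p) = ρ g (f p) := by
  refine congrFun (ha.equalizer (hf.comp (ρ g).continuous) ((ρ g).continuous.comp hf) ?_) p
  funext h
  calc
    f (ρ g (ρ h a)) = f (ρ (g * h) a) := by rw [map_mul, RelIso.mul_apply]
    _ = ρ (g * h) b := hfa (g * h)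
    _ = ρ g (f (ρ h a)) := by rw [map_mul, RelIso.mul_apply, hfa]

end Action

theorem incompressible_interval_sup_map_general {G X : Type*} [Group G]
    [ConditionallyCompleteLinearOrder X] [TopologicalSpace X] [OrderTopology X] [DenselyOrdered X]
    [NoMinOrder X] [NoMaxOrder X] {ρ : G →* (X ≃o X)} {a b : X}
    (ha : DenseRange fun g : G => ρ g a) (hb : DenseRange fun g : G => ρ g b)
    (hcover : ∀ p, ∃ g : G, p ∈ Set.Ico (ρ g a) (ρ g b)) (hinc : IsIncompressible ρ a b) :
    (∀ p : X, {y : X | ∃ g : G, ρ g a ≤ p ∧ ρ g b = y}.Nonempty ∧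
        BddAbove {y : X | ∃ g : G, ρ g a ≤ p ∧ ρ g b = y}) ∧
    ∀ Z : X → X, (∀ p : X, Z p = sSup {y : X | ∃ g : G, ρ g a ≤ p ∧ ρ g b = y}) →
      (∀ g : G, Z (ρ g a) = ρ g b) ∧
      StrictMono Z ∧ Continuous Z ∧
      (∀ p : X, p < Z p) ∧
      (∀ (g : G) (p : X), Z (ρ g p) = ρ g (Z p)) ∧
      (∀ y x : X, ∃ n : ℕ, x ≤ Z^[n] y) := by
  have hab : a ≤ b := by
    obtain ⟨g, hg⟩ := hcover a
    exact (ρ g).le_iff_le.1 (hg.1.trans_lt hg.2).le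
  have hiff := hinc.apply_le_apply_iff hab
  have hle (g h : G) : ρ g a ≤ ρ h a → ρ g b ≤ ρ h b := (hiff g h).1
  refine ⟨fun p => ⟨image_setOf_le_nonempty ha _ p, bddAbove_image_setOf_le ha hle p⟩,
    fun Z hZ => ?_⟩
  obtain rfl : Z = supExtension (fun g => ρ g a) (fun g => ρ g b) := funext hZ
  have hcont := continuous_supExtension ha hb hle
  have horbit := supExtension_apply hle
  have hlt (p : X) : p < supExtension (fun g => ρ g a) (fun g => ρ g b) p := by
    obtain ⟨g, hga, hgb⟩ := hcover p
    exact hgb.trans_le (le_supExtension ha hle hga)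
  exact ⟨horbit, strictMono_supExtension ha hiff, hcont, hlt,
    map_apply_of_denseRange hcont ha horbit, exists_le_iterate_of_forall_lt hcont hlt⟩

/-- **The map `Z` associated to an incompressible interval.**

Let `G` act minimally on `ℝ` by orientation-preserving homeomorphisms, and let `[a,b]`
(`a < b`) be an incompressible interval: no `g ∈ G` maps `[a,b]` to a proper subset of itself.
Then for every `p` the set `{g(b) : g ∈ G, g(a) ≤ p}` is nonempty and bounded above, so
`Z p := sup {g(b) : g ∈ G, g(a) ≤ p}` is well defined, and `Z` satisfies:
(1) `Z (g a) = g b` for all `g ∈ G`;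
(2) `Z` is strictly increasing and continuous;
(3) `Z p > p` for all `p`;
(4) `Z` commutes with the action of `G`;
(5) the iterates of `Z` escape to `+∞`. -/
theorem incompressible_interval_sup_map {G : Type*} [Group G] (ρ : G →* (ℝ ≃o ℝ))
    (hmin : ∀ x : ℝ, Dense (Set.range fun g : G => ρ g x))
    (a b : ℝ) (hab : a < b)
    (hinc : ∀ g : G, ¬((ρ g) '' Set.Icc a b ⊂ Set.Icc a b)) :
    (∀ p : ℝ, {y : ℝ | ∃ g : G, ρ g a ≤ p ∧ ρ g b = y}.Nonempty ∧
        BddAbove {y : ℝ | ∃ g : G, ρ g a ≤ p ∧ ρ g b = y}) ∧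
    ∀ Z : ℝ → ℝ, (∀ p : ℝ, Z p = sSup {y : ℝ | ∃ g : G, ρ g a ≤ p ∧ ρ g b = y}) →
      (∀ g : G, Z (ρ g a) = ρ g b) ∧
      StrictMono Z ∧ Continuous Z ∧
      (∀ p : ℝ, p < Z p) ∧
      (∀ (g : G) (p : ℝ), Z (ρ g p) = ρ g (Z p)) ∧
      (∀ y x : ℝ, ∃ n : ℕ, x ≤ Z^[n] y) := by
  exact incompressible_interval_sup_map_general (hmin a) (hmin b)
    (fun p => exists_mem_Ico_of_denseRange (hmin p) hab) hinc
end

section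
/- Let G be a group acting minimally on ℝ by orientation-preserving homeomorphisms, and suppose that for every nondegenerate compact interval I ⊆ ℝ there exists g ∈ G with g(I) ⊊ I (every interval can be taken properly inside itself). Then for any two nondegenerate compact intervals I, J ⊆ ℝ there exists g ∈ G with g(I) ⊆ J. -/
/-!
Suppose no translate of `[a, b]` lies in `[c, d]`. Send each point `x` to the supremum `T x` of the
right endpoints of those translates of `[c, d]` that start at or before `x`: a translate `[c', d']`
with `c' ≤ a` and `b ≤ d'` would contain `[a, b]`, so the endpoints counted at `x = a` are bounded
by `b`; since some group element moves `x` to the left of `a`, those counted at any `x` are bounded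
too. The map `T` is monotone, commutes with the action, and moves every point to the right.

If `T` took the same value at two distinct points, it would be constant on an interval; by
minimality the translates of that interval cover the line, so `T` would be locally constant, hence
constant, which contradicts `T x < T (T x)`. So `T` is strictly increasing. If now `g` maps
`[x, T x]` into itself, then `x ≤ g x`, and `T (g x) = g (T x) ≤ T x` forces `g x ≤ x`; thus `g`
fixes both endpoints, and `[x, T x]` is not compressible.
-/

section OrderPreservingAction

open MulAction Set
open scoped Pointwise

variable {G X : Type*} [Group G] [MulAction G X]

variable (G) in
theorem exists_smul_mem_Ioo [LinearOrder X] [DenselyOrdered X] [TopologicalSpace X]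
    [OrderClosedTopology X] [IsMinimal G X] {a b : X} (hab : a < b) (x : X) :
    ∃ g : G, g • x ∈ Ioo a b :=
  isOpen_Ioo.exists_smul_mem G x (nonempty_Ioo.2 hab)

/-- The right endpoints of the translates of `[c, d]` that start at or before `x`; their
supremum is `translateSup G c d x`. -/
def translateEnds (G : Type*) {X : Type*} [Group G] [MulAction G X] [Preorder X] (c d x : X) :
    Set X :=
  (fun g : G => g • d) '' {g | g • c ≤ x}

theorem translateEnds_subset_translateEnds [Preorder X] (c d : X) {x y : X} (hxy : x ≤ y) :
    translateEnds G c d x ⊆ translateEnds G c d y :=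
  image_mono fun _ hg => le_trans hg hxy

section Preorder

variable [Preorder X] [CovariantClass G X HSMul.hSMul LE.le]

/-- The order automorphism of `X` given by an element of a group acting on `X` by monotone maps,
through which order-theoretic facts about the action follow from those about order isomorphisms. -/
def smulOrderIso (g : G) : X ≃o X :=
  (toPerm g).toOrderIso (smul_mono_right g) (smul_mono_right g⁻¹)

theorem smul_set_Icc (g : G) (x y : X) : g • Icc x y = Icc (g • x) (g • y) :=
  (smulOrderIso g).image_Icc x y

theorem inv_smul_lt_iff_lt_smul {g : G} {x y : X} : g⁻¹ • x < y ↔ x < g • y :=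
  (smulOrderIso g).symm_apply_lt

theorem lt_inv_smul_iff_smul_lt {g : G} {x y : X} : x < g⁻¹ • y ↔ g • x < y :=
  (smulOrderIso g).lt_symm_apply

theorem smul_mem_translateEnds {c d x y : X} (g : G) (hy : y ∈ translateEnds G c d x) :
    g • y ∈ translateEnds G c d (g • x) := by
  obtain ⟨h, hh, rfl⟩ := hy
  refine ⟨g * h, ?_, mul_smul g h d⟩
  simpa only [mem_ofPred_eq, mul_smul] using smul_mono_right g hh

theorem smul_translateEnds (g : G) (c d x : X) :
    g • translateEnds G c d x = translateEnds G c d (g • x) := by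
  refine Subset.antisymm (smul_set_subset_iff.2 fun _ => smul_mem_translateEnds g) fun y hy => ?_
  rw [mem_smul_set_iff_inv_smul_mem]
  simpa only [inv_smul_smul] using smul_mem_translateEnds g⁻¹ hy

end Preorder

section LinearOrder

variable [LinearOrder X] [CovariantClass G X HSMul.hSMul LE.le]

theorem not_smul_Icc_ssubset_of_strictMono {f : X → X} (hf : StrictMono f) {g : G} {x : X}
    (hfg : f (g • x) = g • f x) (hx : x ≤ f x) : ¬ g • Icc x (f x) ⊂ Icc x (f x) := by
  rw [smul_set_Icc]
  intro hss
  obtain ⟨hleft, hright⟩ := (Icc_subset_Icc_iff (smul_mono_right g hx)).1 hss.subset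
  have hgx : g • x = x := le_antisymm (hf.le_iff_le.1 (hfg.trans_le hright)) hleft
  rw [← hfg, hgx] at hss
  exact hss.ne rfl

theorem mem_upperBounds_translateEnds {a b c d : X} (h : ¬ ∃ g : G, g • Icc a b ⊆ Icc c d) :
    b ∈ upperBounds (translateEnds G c d a) := by
  rintro _ ⟨g, hga, rfl⟩
  by_contra! hlt
  refine h ⟨g⁻¹, ?_⟩
  rw [smul_set_subset_iff_subset_inv_smul_set, inv_inv, smul_set_Icc]
  exact Icc_subset_Icc hga hlt.le

variable [TopologicalSpace X] [OrderTopology X] [IsMinimal G X]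

section DenselyOrdered

variable [DenselyOrdered X]

variable (G) in
theorem exists_smul_lt {a b : X} (hab : a < b) (x : X) : ∃ g : G, g • x < a := by
  obtain ⟨h, hah, -⟩ := exists_smul_mem_Ioo G hab a
  obtain ⟨g, -, hga⟩ := exists_smul_mem_Ioo G (inv_smul_lt_iff_lt_smul.2 hah) x
  exact ⟨g, hga⟩

theorem exists_mem_translateEnds_gt {c d : X} (hcd : c < d) (x : X) :
    ∃ y ∈ translateEnds G c d x, x < y := by
  obtain ⟨g, hcg, hgd⟩ := exists_smul_mem_Ioo G hcd x
  exact ⟨g⁻¹ • d, ⟨g⁻¹, (inv_smul_lt_iff_lt_smul.2 hcg).le, rfl⟩, lt_inv_smul_iff_smul_lt.2 hgd⟩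

theorem translateEnds_nonempty {c d : X} (hcd : c < d) (x : X) : (translateEnds G c d x).Nonempty :=
  (exists_mem_translateEnds_gt hcd x).imp fun _ => And.left

theorem bddAbove_translateEnds {a b c d : X} (hab : a < b)
    (h : ¬ ∃ g : G, g • Icc a b ⊆ Icc c d) (x : X) : BddAbove (translateEnds G c d x) := by
  obtain ⟨g, hga⟩ := exists_smul_lt G hab x
  have hbdd : BddAbove (g • translateEnds G c d x) := by
    rw [smul_translateEnds]
    exact BddAbove.mono (translateEnds_subset_translateEnds c d hga.le)
      ⟨b, mem_upperBounds_translateEnds h⟩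
  exact (smulOrderIso g).bddAbove_image.1 hbdd

theorem isLocallyConstant_of_monotone_of_smul_of_eq {Y : Type*} [PartialOrder Y] [MulAction G Y]
    {f : X → Y} (hf : Monotone f) (hsmul : ∀ (g : G) (x : X), f (g • x) = g • f x) {x y : X}
    (hxy : x < y) (hfxy : f x = f y) : IsLocallyConstant f := by
  have hconst : ∀ z ∈ Ioo x y, f z = f x := fun z hz =>
    le_antisymm ((hf hz.2.le).trans_eq hfxy.symm) (hf hz.1.le)
  rw [IsLocallyConstant.iff_eventually_eq]
  intro z
  obtain ⟨g, hgz⟩ := exists_smul_mem_Ioo G hxy z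
  have hnear : ∀ᶠ w in nhds z, g • w ∈ Ioo x y :=
    (smulOrderIso g).continuous.continuousAt.eventually_mem (isOpen_Ioo.mem_nhds hgz)
  filter_upwards [hnear] with w hgw
  have hfg : g • f w = g • f z := by rw [← hsmul, ← hsmul, hconst _ hgw, hconst _ hgz]
  exact smul_left_cancel g hfg

end DenselyOrdered

theorem strictMono_or_const_of_monotone_of_smul [PreconnectedSpace X] {Y : Type*} [PartialOrder Y]
    [MulAction G Y] {f : X → Y} (hf : Monotone f) (hsmul : ∀ (g : G) (x : X), f (g • x) = g • f x) :
    StrictMono f ∨ ∀ x y, f x = f y := by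
  have : DenselyOrdered X := denselyOrdered_of_preconnectedSpace
  refine or_iff_not_imp_left.2 fun hstrict => ?_
  simp only [StrictMono, not_forall] at hstrict
  obtain ⟨x, y, hxy, hlt⟩ := hstrict
  have hfxy : f x = f y := (hf hxy.le).eq_of_not_lt hlt
  have hloc : IsLocallyConstant f := isLocallyConstant_of_monotone_of_smul_of_eq hf hsmul hxy hfxy
  exact hloc.apply_eq_of_preconnectedSpace

end LinearOrder

section ConditionallyCompleteLinearOrder

variable [ConditionallyCompleteLinearOrder X] [DenselyOrdered X] [TopologicalSpace X]
  [OrderTopology X] [CovariantClass G X HSMul.hSMul LE.le] [IsMinimal G X]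

/-- The supremum of the right endpoints of the translates of `[c, d]` that start at or before `x`:
the map `T` of the introduction. It is meaningful only when these endpoints are bounded above. -/
noncomputable def translateSup (G : Type*) {X : Type*} [Group G] [MulAction G X]
    [ConditionallyCompleteLinearOrder X] (c d x : X) : X :=
  sSup (translateEnds G c d x)

theorem lt_translateSup {c d x : X} (hcd : c < d) (hbdd : BddAbove (translateEnds G c d x)) :
    x < translateSup G c d x := by
  obtain ⟨y, hy, hxy⟩ := exists_mem_translateEnds_gt (G := G) hcd x
  exact hxy.trans_le (le_csSup hbdd hy)

theorem monotone_translateSup {c d : X} (hcd : c < d)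
    (hbdd : ∀ x, BddAbove (translateEnds G c d x)) : Monotone (translateSup G c d) := fun x y hxy =>
  csSup_le_csSup (hbdd y) (translateEnds_nonempty hcd x)
    (translateEnds_subset_translateEnds c d hxy)

theorem translateSup_smul {c d x : X} (hcd : c < d) (hbdd : BddAbove (translateEnds G c d x))
    (g : G) : translateSup G c d (g • x) = g • translateSup G c d x := by
  rw [translateSup, ← smul_translateEnds]
  exact ((smulOrderIso g).map_csSup' (translateEnds_nonempty hcd x) hbdd).symm

theorem compressible_action_transitive_general
    (hcomp : ∀ a b : X, a < b → ∃ g : G, g • Icc a b ⊂ Icc a b) {a b c d : X}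
    (hab : a < b) (hcd : c < d) : ∃ g : G, g • Icc a b ⊆ Icc c d := by
  by_contra h
  have hbdd := bddAbove_translateEnds hab h
  have hlt (x : X) : x < translateSup G c d x := lt_translateSup hcd (hbdd x)
  have hsmul (g : G) (x : X) := translateSup_smul hcd (hbdd x) g
  obtain hstrict | hconst :=
    strictMono_or_const_of_monotone_of_smul (monotone_translateSup hcd hbdd) hsmul
  · obtain ⟨g, hg⟩ := hcomp a _ (hlt a)
    exact not_smul_Icc_ssubset_of_strictMono hstrict (hsmul g a) (hlt a).le hg
  · exact (hlt _).ne (hconst a _)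

end ConditionallyCompleteLinearOrder

end OrderPreservingAction

/-- **Compressible case of the dichotomy.**

Let `G` act minimally on `ℝ` by orientation-preserving homeomorphisms, and suppose every
nondegenerate compact interval can be taken properly inside itself by some element of `G`.
Then any nondegenerate compact interval can be mapped inside any other by some element of `G`. -/
theorem compressible_action_transitive {G : Type*} [Group G] (ρ : G →* (ℝ ≃o ℝ))
    (hmin : ∀ x : ℝ, Dense (Set.range fun g : G => ρ g x))
    (hcomp : ∀ a b : ℝ, a < b → ∃ g : G, (ρ g) '' Set.Icc a b ⊂ Set.Icc a b) :
    ∀ a b c d : ℝ, a < b → c < d →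
      ∃ g : G, (ρ g) '' Set.Icc a b ⊆ Set.Icc c d := by
  let _ : MulAction G ℝ := MulAction.compHom ℝ ρ
  have : CovariantClass G ℝ HSMul.hSMul LE.le := ⟨fun g _ _ hxy => (ρ g).monotone hxy⟩
  have : MulAction.IsMinimal G ℝ := ⟨hmin⟩
  exact fun _ _ _ _ => compressible_action_transitive_general hcomp
end

section
/- Let A ⊆ S¹ and let f : A → S¹ be a map whose image f(A) is dense in S¹ and which weakly preserves circular order: for every positively ordered triple (x,y,z) of points of A, the triple (f(x),f(y),f(z)) is not negatively ordered. Then f admits a unique extension to a monotone map φ : S¹ → S¹ with φ(a) = f(a) for all a ∈ A. -/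
/-- The circle, modelled as `ℝ/ℤ`. -/
abbrev 𝕊 : Type := AddCircle (1 : ℝ)

/-- A triple `(x, y, z)` of points of the circle is *positively ordered* if the three points
are distinct and `y` lies in the open counterclockwise arc from `x` to `z`:  there are lifts
`a < b < c < a + 1` of `x`, `y`, `z` respectively. -/
def PosOrdered (x y z : 𝕊) : Prop :=
  ∃ a b c : ℝ, a < b ∧ b < c ∧ c < a + 1 ∧ x = (a : 𝕊) ∧ y = (b : 𝕊) ∧ z = (c : 𝕊)

/-- A triple `(x, y, z)` is *negatively ordered* if `y` lies in the open counterclockwise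
arc from `z` to `x`. -/
def NegOrdered (x y z : 𝕊) : Prop := PosOrdered z y x

/-- A *monotone map* of the circle: a continuous map of degree one (it admits a continuous
lift `F : ℝ → ℝ` with `F (x + 1) = F x + 1`) which does not reverse the circular order:
the image of a positively ordered triple is never negatively ordered. -/
def IsMonotoneCircleMap (φ : 𝕊 → 𝕊) : Prop :=
  Continuous φ ∧
  (∃ F : ℝ → ℝ, Continuous F ∧ (∀ x : ℝ, F (x + 1) = F x + 1) ∧
      ∀ x : ℝ, φ (x : 𝕊) = ((F x : ℝ) : 𝕊)) ∧
  ∀ x y z : 𝕊, PosOrdered x y z → ¬ NegOrdered (φ x) (φ y) (φ z)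

/-- The pair `{x, y}` of distinct points *links* the pair `{z, w}` of distinct points if
`z` and `w` lie in different connected components of `𝕊 \ {x, y}`. -/
def Links (x y z w : 𝕊) : Prop :=
  z ∈ ({x, y}ᶜ : Set 𝕊) ∧ w ∈ ({x, y}ᶜ : Set 𝕊) ∧
    connectedComponentIn ({x, y}ᶜ : Set 𝕊) z ≠ connectedComponentIn ({x, y}ᶜ : Set 𝕊) w

/-- The complement of the diagonal in `𝕊 × 𝕊`. -/
def OffDiagonal : Set (𝕊 × 𝕊) := {p | p.1 ≠ p.2}

/-- A *laminar relation* on the circle: a symmetric subset of `𝕊 × 𝕊` minus the diagonal,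
closed as a subset of `𝕊 × 𝕊` minus the diagonal, such that no two of its pairs link
each other. -/
def IsLaminar (R : Set (𝕊 × 𝕊)) : Prop :=
  R ⊆ OffDiagonal ∧
  (∀ x y : 𝕊, (x, y) ∈ R → (y, x) ∈ R) ∧
  closure R ∩ OffDiagonal ⊆ R ∧
  ∀ x y z w : 𝕊, (x, y) ∈ R → (z, w) ∈ R → ¬ Links x y z w

/-!
A circularly monotone map reflects strict circular order, so two such maps that agree on a set with
dense image must agree: this rigidity gives uniqueness.

For existence, fix a real `α` above a point of `A` and a real `β` above its image, and lift `f` to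
the function that sends `[α + n, α + n + 1)` into `[β + n, β + n + 1)`. Its running supremum over
the points above `A` is a monotone degree one lift `F`. Where `f ≠ β` the running supremum is
attained at the current point, so the circle map induced by `F` agrees with `f` there. Where `f = β`
the lift cannot tell the two ends of `[β + n, β + n + 1]` apart, but deleting `β` keeps the image of
`f` dense, and agreement at these points follows from rigidity. The range of `F` is then dense, and
a monotone real function with dense range is continuous.
-/

open Set

section CircularOrder

variable {X Y : Type*} [CircularOrder X] [CircularOrder Y] {f g : X → Y} {d s : Set X}

/-- A map between circular orders is *circularly monotone* on `s` if it weakly preserves the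
circular order of triples in `s`, in the sense that it never reverses a strictly ordered one. -/
def CircularMonotoneOn (f : X → Y) (s : Set X) : Prop :=
  ∀ ⦃x⦄, x ∈ s → ∀ ⦃y⦄, y ∈ s → ∀ ⦃z⦄, z ∈ s → sbtw x y z → btw (f x) (f y) (f z)

namespace CircularMonotoneOn

theorem sbtw_of_sbtw_map (hf : CircularMonotoneOn f s) {x y z : X} (hx : x ∈ s) (hy : y ∈ s)
    (hz : z ∈ s) (h : sbtw (f x) (f y) (f z)) : sbtw x y z := by
  rw [sbtw_iff_not_btw]
  intro hzyx
  by_cases hxyz : btw x y z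
  · rcases hxyz.antisymm hzyx with rfl | rfl | rfl
    · exact sbtw_irrefl_left h
    · exact sbtw_irrefl_right h
    · exact sbtw_irrefl_left_right h
  · exact h.not_btw (hf hz hy hx (hzyx.sbtw_of_not_btw hxyz))

/-- If `f x ≠ g x`, then points `a`, `b` of `d` with values in the two open arcs between `f x` and
`g x` would have to be in opposite circular positions relative to `x` for `f` and for `g`. -/
theorem eqOn_of_eqOn (hf : CircularMonotoneOn f s) (hg : CircularMonotoneOn g s) (hds : d ⊆ s)
    (hd : ∀ u v, u ≠ v → ∃ y ∈ f '' d, sbtw u y v) (hfg : EqOn f g d) : EqOn f g s := by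
  intro x hx
  by_contra hne
  obtain ⟨_, ⟨a, ha, rfl⟩, hfa⟩ := hd _ _ hne
  obtain ⟨_, ⟨b, hb, rfl⟩, hfb⟩ := hd _ _ (Ne.symm hne)
  have hxab : sbtw x a b :=
    hf.sbtw_of_sbtw_map hx (hds ha) (hds hb) (hfa.trans_right hfb.cyclic_right)
  have hxba : sbtw x b a := by
    apply hg.sbtw_of_sbtw_map hx (hds hb) (hds ha)
    rw [← hfg ha, ← hfg hb]
    exact hfb.trans_right hfa.cyclic_right
  exact hxab.not_sbtw hxba.cyclic_left

end CircularMonotoneOn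

end CircularOrder

section AddCircle

variable {𝕜 : Type*} [AddCommGroup 𝕜] [LinearOrder 𝕜] [IsOrderedAddMonoid 𝕜] [Archimedean 𝕜]
  {p : 𝕜} [Fact (0 < p)]

theorem btw_coe_of_le {a b c : 𝕜} (hab : a ≤ b) (hbc : b ≤ c) (hca : c ≤ a + p) :
    btw (a : AddCircle p) b c := by
  rcases hab.eq_or_lt with rfl | hab
  · exact btw_rfl_left
  rcases (hbc.trans hca).eq_or_lt with rfl | hba
  · rw [hca.antisymm hbc]
    exact btw_rfl_right
  · rw [QuotientAddGroup.btw_coe_iff, (toIcoMod_eq_self _).2 ⟨hab.le, hba⟩,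
      (toIocMod_eq_self _).2 ⟨hab.trans_le hbc, hca⟩]
    exact hbc

theorem sbtw_coe_iff {a b c : 𝕜} :
    sbtw (a : AddCircle p) b c ↔
      toIocMod (Fact.out : 0 < p) a b < toIcoMod (Fact.out : 0 < p) a c := by
  rw [sbtw_iff_not_btw, ← btw_cyclic, ← btw_cyclic, QuotientAddGroup.btw_coe_iff, not_le]

theorem sbtw_iff_exists_coe {x y z : AddCircle p} :
    sbtw x y z ↔ ∃ a b c : 𝕜, a < b ∧ b < c ∧ c < a + p ∧
      x = (a : AddCircle p) ∧ y = (b : AddCircle p) ∧ z = (c : AddCircle p) := by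
  constructor
  · intro h
    obtain ⟨a, rfl⟩ := QuotientAddGroup.mk_surjective x
    obtain ⟨b, hb, rfl⟩ : ∃ b ∈ Ioc a (a + p), (b : AddCircle p) = y :=
      ⟨AddCircle.equivIoc p a y, Subtype.prop _, AddCircle.coe_equivIoc⟩
    obtain ⟨c, hc, rfl⟩ : ∃ c ∈ Ico a (a + p), (c : AddCircle p) = z :=
      ⟨AddCircle.equivIco p a z, Subtype.prop _, AddCircle.coe_equivIco⟩
    rw [sbtw_coe_iff, (toIocMod_eq_self _).2 hb, (toIcoMod_eq_self _).2 hc] at h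
    exact ⟨a, b, c, hb.1, h, hc.2, rfl, rfl, rfl⟩
  · rintro ⟨a, b, c, hab, hbc, hca, rfl, rfl, rfl⟩
    rwa [sbtw_coe_iff, (toIocMod_eq_self _).2 ⟨hab, (hbc.trans hca).le⟩,
      (toIcoMod_eq_self _).2 ⟨(hab.trans hbc).le, hca⟩]

theorem exists_mem_sbtw_of_dense [TopologicalSpace 𝕜] [OrderTopology 𝕜] [DenselyOrdered 𝕜]
    {s : Set (AddCircle p)} (hs : Dense s) {u v : AddCircle p} (huv : u ≠ v) :
    ∃ y ∈ s, sbtw u y v := by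
  obtain ⟨a, rfl⟩ := QuotientAddGroup.mk_surjective u
  obtain ⟨b, hb, rfl⟩ : ∃ b ∈ Ico a (a + p), (b : AddCircle p) = v :=
    ⟨AddCircle.equivIco p a v, Subtype.prop _, AddCircle.coe_equivIco⟩
  have hab : a < b := hb.1.lt_of_ne fun h => huv (congrArg _ h)
  obtain ⟨t, hts, hat, htb⟩ := (hs.preimage QuotientAddGroup.isOpenMap_coe).exists_between hab
  exact ⟨t, hts, sbtw_iff_exists_coe.2 ⟨a, t, b, hat, htb, hb.2, rfl, rfl, rfl⟩⟩

instance nontrivial_addCircle [DenselyOrdered 𝕜] : Nontrivial (AddCircle p) := by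
  obtain ⟨a, ha, hap⟩ := exists_between (Fact.out : 0 < p)
  refine ⟨(0 : 𝕜), a, ?_⟩
  rw [Ne, AddCircle.coe_eq_coe_iff_of_mem_Ico (a := 0)]
  exacts [ha.ne, ⟨le_rfl, by simpa using Fact.out⟩, ⟨ha.le, by simpa using hap⟩]

end AddCircle

theorem coe_add_intCast (x : ℝ) (n : ℤ) : ((x + n : ℝ) : 𝕊) = x := by
  rw [AddCircle.coe_add, add_eq_left, AddCircle.coe_eq_zero_iff]
  exact ⟨n, by simp⟩

/-- The self-map of the circle `ℝ/ℤ` induced by a monotone degree one lift `F : ℝ → ℝ`. -/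
def inducedCircleMap (F : CircleDeg1Lift) : 𝕊 → 𝕊 :=
  Function.Periodic.lift (f := fun x : ℝ => (F x : 𝕊)) (c := 1) fun x => by
    simp only [F.map_add_one, AddCircle.coe_add_period]

theorem inducedCircleMap_coe (F : CircleDeg1Lift) (x : ℝ) :
    inducedCircleMap F (x : 𝕊) = (F x : 𝕊) :=
  rfl

theorem circularMonotoneOn_inducedCircleMap (F : CircleDeg1Lift) (s : Set 𝕊) :
    CircularMonotoneOn (inducedCircleMap F) s := by
  intro x _ y _ z _ h
  obtain ⟨a, b, c, hab, hbc, hca, rfl, rfl, rfl⟩ := sbtw_iff_exists_coe.1 h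
  refine btw_coe_of_le (F.mono hab.le) (F.mono hbc.le) ?_
  rw [← F.map_add_one]
  exact F.mono hca.le

theorem continuous_of_denseRange_inducedCircleMap {F : CircleDeg1Lift}
    (hF : DenseRange (inducedCircleMap F)) : Continuous F := by
  refine F.monotone.continuous_of_denseRange
    ((hF.preimage QuotientAddGroup.isOpenMap_coe).mono ?_)
  rintro t ⟨x, hx⟩
  obtain ⟨s, rfl⟩ := QuotientAddGroup.mk_surjective x
  obtain ⟨n, hn⟩ := AddSubgroup.mem_zmultiples_iff.1 (QuotientAddGroup.eq_iff_sub_mem.1 hx.symm)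
  refine ⟨s + n, ?_⟩
  rw [F.map_add_int]
  simp only [zsmul_eq_mul, mul_one] at hn
  linarith

theorem posOrdered_iff_sbtw {x y z : 𝕊} : PosOrdered x y z ↔ sbtw x y z :=
  sbtw_iff_exists_coe.symm

theorem circularMonotoneOn_iff_not_negOrdered {f : 𝕊 → 𝕊} {A : Set 𝕊} :
    CircularMonotoneOn f A ↔ ∀ x ∈ A, ∀ y ∈ A, ∀ z ∈ A,
      PosOrdered x y z → ¬ NegOrdered (f x) (f y) (f z) := by
  simp only [CircularMonotoneOn, NegOrdered, posOrdered_iff_sbtw, btw_iff_not_sbtw]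

theorem IsMonotoneCircleMap.circularMonotoneOn {φ : 𝕊 → 𝕊} (hφ : IsMonotoneCircleMap φ)
    (s : Set 𝕊) : CircularMonotoneOn φ s :=
  circularMonotoneOn_iff_not_negOrdered.2 fun x _ y _ z _ => hφ.2.2 x y z

theorem isMonotoneCircleMap_inducedCircleMap {F : CircleDeg1Lift} (hF : Continuous F) :
    IsMonotoneCircleMap (inducedCircleMap F) := by
  refine ⟨?_, ⟨F, hF, F.map_add_one, inducedCircleMap_coe F⟩, fun x y z =>
    circularMonotoneOn_iff_not_negOrdered.1 (circularMonotoneOn_inducedCircleMap F univ)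
      x trivial y trivial z trivial⟩
  exact (QuotientAddGroup.isQuotientMap_mk _).continuous_iff.2
    ((AddCircle.continuous_mk' 1).comp hF)

theorem exists_circleDeg1Lift_isLUB {A : Set 𝕊} (hA : A.Nonempty) {g : ℝ → ℝ} {C : ℝ}
    (hg : ∀ s, g (s + 1) = g s + 1) (hgC : ∀ s, g s ≤ s + C) :
    ∃ F : CircleDeg1Lift, ∀ x, IsLUB (g '' {s | (s : 𝕊) ∈ A ∧ s ≤ x}) (F x) := by
  have exists_lub (x : ℝ) : ∃ t, IsLUB (g '' {s | (s : 𝕊) ∈ A ∧ s ≤ x}) t := by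
    obtain ⟨a, ha⟩ := hA
    refine Real.exists_isLUB (Set.Nonempty.image g ⟨AddCircle.equivIco 1 (x - 1) a, ?_, ?_⟩)
      ⟨x + C, ?_⟩
    · rwa [AddCircle.coe_equivIco]
    · linarith [(AddCircle.equivIco 1 (x - 1) a).2.2]
    · rintro _ ⟨s, ⟨-, hs⟩, rfl⟩
      linarith [hgC s]
  choose F hF using exists_lub
  have le_of_mem {s x : ℝ} (hs : (s : 𝕊) ∈ A) (hsx : s ≤ x) : g s ≤ F x :=
    (hF x).1 ⟨s, ⟨hs, hsx⟩, rfl⟩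
  have le_of_forall {x t : ℝ} (h : ∀ s : ℝ, (s : 𝕊) ∈ A → s ≤ x → g s ≤ t) : F x ≤ t :=
    (hF x).2 <| by rintro _ ⟨s, ⟨hs, hsx⟩, rfl⟩; exact h s hs hsx
  refine ⟨⟨⟨F, fun x y hxy => le_of_forall fun s hs hsx => le_of_mem hs (hsx.trans hxy)⟩,
    fun x => le_antisymm ?_ ?_⟩, hF⟩
  · refine le_of_forall fun s hs hsx => ?_
    have hs' : ((s - 1 : ℝ) : 𝕊) ∈ A := by rwa [← AddCircle.coe_add_period, sub_add_cancel]
    have := hg (s - 1)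
    rw [sub_add_cancel] at this
    linarith [le_of_mem hs' (sub_le_iff_le_add.2 hsx)]
  · suffices F x ≤ F (x + 1) - 1 from le_sub_iff_add_le.1 this
    refine le_of_forall fun s hs hsx => ?_
    have hs' : ((s + 1 : ℝ) : 𝕊) ∈ A := by rwa [AddCircle.coe_add_period]
    linarith [hg s, le_of_mem hs' (add_le_add_left hsx 1)]

section StepLift

variable (f : 𝕊 → 𝕊) (α β s : ℝ)

/-- The lift of `f : 𝕊 → 𝕊` to `ℝ` sending each `[α + n, α + n + 1)` into `[β + n, β + n + 1)`.
It need not be monotone even if `f` is circularly monotone with `f α = β`: points of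
`(α + n, α + n + 1)` at which `f` takes the value `β` are always sent to `β + n`, whereas a
monotone lift may have to send them to `β + n + 1`. -/
noncomputable def stepLift : ℝ :=
  AddCircle.equivIco 1 β (f s) + ⌊s - α⌋

theorem coe_stepLift : (stepLift f α β s : 𝕊) = f s := by
  rw [stepLift, coe_add_intCast, AddCircle.coe_equivIco]

theorem stepLift_add_one : stepLift f α β (s + 1) = stepLift f α β s + 1 := by
  rw [stepLift, stepLift, AddCircle.coe_add_period, add_sub_right_comm, Int.floor_add_one]
  push_cast
  ring

theorem stepLift_mem_Ico : stepLift f α β s ∈ Ico (β + ⌊s - α⌋) (β + ⌊s - α⌋ + 1) := by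
  obtain ⟨hge, hlt⟩ := (AddCircle.equivIco 1 β (f s)).2
  constructor <;> rw [stepLift] <;> linarith

theorem stepLift_le_add : stepLift f α β s ≤ s + (β - α + 1) := by
  linarith [(stepLift_mem_Ico f α β s).2, Int.floor_le (s - α)]

variable {f α β s}

theorem stepLift_eq_add_floor_iff : stepLift f α β s = β + ⌊s - α⌋ ↔ f s = β := by
  constructor <;> intro h
  · rw [← coe_stepLift f α β, h, coe_add_intCast]
  · rw [stepLift, h, AddCircle.equivIco_coe_of_mem ⟨le_rfl, lt_add_one β⟩]

theorem stepLift_le_stepLift {A : Set 𝕊} {t : ℝ} (hf : CircularMonotoneOn f A)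
    (hα : (α : 𝕊) ∈ A) (hαβ : f α = β) (hs : (s : 𝕊) ∈ A) (ht : (t : 𝕊) ∈ A) (hst : s ≤ t)
    (htβ : f t ≠ β) : stepLift f α β s ≤ stepLift f α β t := by
  by_contra! hlt
  obtain ⟨-, hs_lt⟩ := stepLift_mem_Ico f α β s
  obtain ⟨ht_ge, -⟩ := stepLift_mem_Ico f α β t
  have floor_eq : ⌊s - α⌋ = ⌊t - α⌋ := by
    refine le_antisymm (Int.floor_le_floor (sub_le_sub_right hst α)) (Int.lt_add_one_iff.1 ?_)
    exact_mod_cast (by linarith : (⌊t - α⌋ : ℝ) < ⌊s - α⌋ + 1)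
  have base_lt_value : β + ⌊t - α⌋ < stepLift f α β t :=
    ht_ge.lt_of_ne' (stepLift_eq_add_floor_iff.not.2 htβ)
  have base_ne_point : α + ⌊t - α⌋ ≠ s := fun h => by
    have hsβ : f s = β := by rw [← h, coe_add_intCast, hαβ]
    have : stepLift f α β s = β + ⌊t - α⌋ := floor_eq ▸ stepLift_eq_add_floor_iff.2 hsβ
    exact (hlt.trans_eq this).not_gt base_lt_value
  have base_lt_point : α + ⌊t - α⌋ < s :=
    base_ne_point.lt_of_le (le_sub_iff_add_le'.1 (floor_eq ▸ Int.floor_le (s - α)))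
  have s_lt_t : s < t := hst.lt_of_ne (by rintro rfl; exact hlt.false)
  have sbtw_points : sbtw (α : 𝕊) s t :=
    sbtw_iff_exists_coe.2 ⟨α + ⌊t - α⌋, s, t, base_lt_point, s_lt_t,
      by linarith [Int.lt_floor_add_one (t - α)], (coe_add_intCast _ _).symm, rfl, rfl⟩
  have sbtw_values : sbtw (β : 𝕊) (f t) (f s) :=
    sbtw_iff_exists_coe.2 ⟨β + ⌊t - α⌋, stepLift f α β t, stepLift f α β s, base_lt_value, hlt,
      floor_eq ▸ hs_lt, (coe_add_intCast _ _).symm, (coe_stepLift _ _ _ _).symm,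
      (coe_stepLift _ _ _ _).symm⟩
  exact sbtw_values.cyclic_left.not_btw (hαβ ▸ hf hα hs ht sbtw_points)

end StepLift

theorem exists_isMonotoneCircleMap_eqOn {A : Set 𝕊} {f : 𝕊 → 𝕊} (hdense : Dense (f '' A))
    (hf : CircularMonotoneOn f A) : ∃ φ, IsMonotoneCircleMap φ ∧ EqOn φ f A := by
  obtain ⟨a, ha⟩ := hdense.nonempty.of_image
  obtain ⟨α, rfl⟩ := QuotientAddGroup.mk_surjective a
  obtain ⟨β, hβ⟩ := QuotientAddGroup.mk_surjective (f α)
  obtain ⟨F, hF⟩ := exists_circleDeg1Lift_isLUB ⟨_, ha⟩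
    (stepLift_add_one f α β) (stepLift_le_add f α β)
  have eqOn_off_base : EqOn f (inducedCircleMap F) (A \ f ⁻¹' {(β : 𝕊)}) := by
    rintro x ⟨hx, hxβ⟩
    obtain ⟨s, rfl⟩ := QuotientAddGroup.mk_surjective x
    have hFs : F s = stepLift f α β s := by
      refine (hF s).unique (IsGreatest.isLUB ⟨⟨s, ⟨hx, le_rfl⟩, rfl⟩, ?_⟩)
      rintro _ ⟨r, ⟨hr, hrs⟩, rfl⟩
      exact stepLift_le_stepLift hf ha hβ.symm hr hx hrs hxβ
    exact (hFs ▸ coe_stepLift f α β s).symm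
  have dense_off_base : Dense (f '' (A \ f ⁻¹' {(β : 𝕊)})) := by
    rw [image_sdiff_preimage]
    exact hdense.sdiff_singleton _
  have eqOn : EqOn f (inducedCircleMap F) A :=
    hf.eqOn_of_eqOn (circularMonotoneOn_inducedCircleMap F A) sdiff_subset
      (fun _ _ => exists_mem_sbtw_of_dense dense_off_base) eqOn_off_base
  have dense_range : DenseRange (inducedCircleMap F) :=
    hdense.mono (eqOn.image_eq ▸ image_subset_range _ _)
  exact ⟨_, isMonotoneCircleMap_inducedCircleMap
    (continuous_of_denseRange_inducedCircleMap dense_range), eqOn.symm⟩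

/-- **Extension of circularly order-preserving maps.**  Let `A ⊆ 𝕊` and let `f` be a map
whose image `f '' A` is dense in the circle and which weakly preserves circular order on `A`:
the image of a positively ordered triple of points of `A` is never negatively ordered.
Then `f` admits a unique extension to a monotone map `φ` of the circle. -/
theorem unique_monotone_extension (A : Set 𝕊) (f : 𝕊 → 𝕊)
    (hdense : Dense (f '' A))
    (hord : ∀ x ∈ A, ∀ y ∈ A, ∀ z ∈ A,
      PosOrdered x y z → ¬ NegOrdered (f x) (f y) (f z)) :
    ∃! φ : 𝕊 → 𝕊, IsMonotoneCircleMap φ ∧ ∀ a ∈ A, φ a = f a := by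
  have hf : CircularMonotoneOn f A := circularMonotoneOn_iff_not_negOrdered.2 hord
  refine existsUnique_of_exists_of_unique (exists_isMonotoneCircleMap_eqOn hdense hf) ?_
  rintro φ ψ ⟨hφ, hφf⟩ ⟨hψ, hψf⟩
  have dense_image : Dense (φ '' A) := (image_congr hφf).symm ▸ hdense
  exact (eqOn_univ φ ψ).1 <|
    (hφ.circularMonotoneOn univ).eqOn_of_eqOn (hψ.circularMonotoneOn univ) (subset_univ A)
      (fun _ _ => exists_mem_sbtw_of_dense dense_image) fun a ha => (hφf a ha).trans (hψf a ha).symm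
end

section
/- Let Y be a metric space, let X ⊆ Y be a subset equipped with its own metric d_X, and suppose there is a function F : ℝ≥0 → ℝ≥0 such that for all a, b ∈ X and r ≥ 0, if d_Y(a,b) ≤ r then d_X(a,b) ≤ F(r) (X is uniformly properly embedded in Y). Let p, q ∈ X and let γ : [0,1] → Y be a continuous path from p to q of finite length ℓ such that every point γ(s) lies within distance t of X (there exists x ∈ X with d_Y(γ(s), x) ≤ t). Then d_X(p,q) ≤ (ℓ + 1) · F(2t + 1). [This is the metric estimate underlying the paper's lemma that each leaf is coarsely quasi-isometrically embedded in a bounded neighborhood of itself.] -/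
/-!
Walk along the path greedily: from the current stop, advance to a later point of the path at
distance exactly `δ`, or to the endpoint once it is within `δ`. Each full step uses up at least `δ`
of the length, so `⌊ℓ / δ⌋ + 1` steps suffice. Points of `X` that are `t`-close to consecutive stops
are at distance at most `2 * t + δ` in `Y`, so each step contributes at most `F (2 * t + δ)` to the
distance in `X`.
-/

open Set

section PathLength

theorem edist_add_eVariationOn_Icc_le {ι E : Type*} [LinearOrder ι] [PseudoEMetricSpace E]
    (γ : ι → E) {a b s : ι} (hs : s ∈ Icc a b) :
    edist (γ a) (γ s) + eVariationOn γ (Icc s b) ≤ eVariationOn γ (Icc a b) :=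
  calc
    edist (γ a) (γ s) + eVariationOn γ (Icc s b)
      ≤ eVariationOn γ (Icc a s) + eVariationOn γ (Icc s b) := by
        gcongr
        exact eVariationOn.edist_le γ (left_mem_Icc.2 hs.1) (right_mem_Icc.2 hs.1)
    _ = eVariationOn γ (Icc a b) := by
        simpa only [univ_inter] using eVariationOn.Icc_add_Icc γ hs.1 hs.2 (mem_univ s)

variable {ι Y : Type*} [ConditionallyCompleteLinearOrder ι] [TopologicalSpace ι] [OrderTopology ι]
  [DenselyOrdered ι] [PseudoMetricSpace Y] {γ : ι → Y} {a b : ι} {δ : ℝ}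

theorem exists_mem_Icc_dist_eq (hab : a ≤ b) (hγ : ContinuousOn γ (Icc a b)) (hδ : 0 ≤ δ)
    (h : δ ≤ dist (γ a) (γ b)) : ∃ s ∈ Icc a b, dist (γ a) (γ s) = δ :=
  intermediate_value_Icc hab (by fun_prop) ⟨by rwa [dist_self], h⟩

theorem exists_dist_le_eVariationOn_Icc_lt (hab : a ≤ b) (hγ : ContinuousOn γ (Icc a b))
    (hδ : 0 ≤ δ) {v : ENNReal} (hv : 0 < v)
    (hvar : eVariationOn γ (Icc a b) < ENNReal.ofReal δ + v) :
    ∃ s ∈ Icc a b, dist (γ a) (γ s) ≤ δ ∧ eVariationOn γ (Icc s b) < v := by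
  rcases le_total (dist (γ a) (γ b)) δ with hclose | hfar
  · exact ⟨b, right_mem_Icc.2 hab, hclose, by simpa using hv⟩
  · obtain ⟨s, hs, hdist⟩ := exists_mem_Icc_dist_eq hab hγ hδ hfar
    have hsplit := edist_add_eVariationOn_Icc_le γ hs
    rw [edist_dist, hdist] at hsplit
    exact ⟨s, hs, hdist.le, lt_of_add_lt_add_left (hsplit.trans_lt hvar)⟩

end PathLength

section CoarseEstimate

variable {ι Y α : Type*} [ConditionallyCompleteLinearOrder ι] [TopologicalSpace ι]
  [OrderTopology ι] [DenselyOrdered ι] [PseudoMetricSpace Y] {γ : ι → Y} {a b : ι}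
  {f : α → Y} {d : α → α → ℝ} {t δ C : ℝ} {p q : α}

/-- The distance `d`, the map `f` and the bound `C` play the roles of `d_X`, of the inclusion
`X → Y` and of `F (2 * t + δ)`. -/
theorem le_mul_of_eVariationOn_Icc_lt
    (d_triangle : ∀ x y z, d x z ≤ d x y + d y z) (hδ : 0 < δ)
    (hC : ∀ x y, dist (f x) (f y) ≤ 2 * t + δ → d x y ≤ C) (hab : a ≤ b)
    (hγ : ContinuousOn γ (Icc a b)) (hnear : ∀ s ∈ Icc a b, ∃ x, dist (γ s) (f x) ≤ t)
    (hp : dist (γ a) (f p) ≤ t) (hq : dist (γ b) (f q) ≤ t) (n : ℕ)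
    (hvar : eVariationOn γ (Icc a b) < ENNReal.ofReal ((n + 1) * δ)) :
    d p q ≤ (n + 1) * C := by
  have d_le {r s : ι} {x y : α} (hx : dist (γ r) (f x) ≤ t) (hy : dist (γ s) (f y) ≤ t)
      (hrs : dist (γ r) (γ s) ≤ δ) : d x y ≤ C :=
    hC x y (by linarith [dist_triangle4_left (γ r) (γ s) (f x) (f y)])
  induction n generalizing a p with
  | zero =>
    have hends : edist (γ a) (γ b) ≤ ENNReal.ofReal δ :=
      (eVariationOn.edist_le γ (left_mem_Icc.2 hab) (right_mem_Icc.2 hab)).trans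
        (by simpa using hvar.le)
    simpa using d_le hp hq ((edist_le_ofReal hδ.le).1 hends)
  | succ n ih =>
    have hbudget : ENNReal.ofReal (((n + 1 : ℕ) + 1) * δ) =
        ENNReal.ofReal δ + ENNReal.ofReal ((n + 1) * δ) := by
      rw [← ENNReal.ofReal_add hδ.le (by positivity)]
      push_cast
      ring_nf
    obtain ⟨s, hs, hstep, hrest⟩ := exists_dist_le_eVariationOn_Icc_lt hab hγ hδ.le
      (ENNReal.ofReal_pos.2 (by positivity)) (hbudget ▸ hvar)
    obtain ⟨y, hy⟩ := hnear s hs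
    have hsub : Icc s b ⊆ Icc a b := Icc_subset_Icc_left hs.1
    calc
      d p q ≤ d p y + d y q := d_triangle p y q
      _ ≤ C + (n + 1) * C := by
        gcongr
        · exact d_le hp hy hstep
        · exact ih hs.2 (hγ.mono hsub) (fun r hr => hnear r (hsub hr)) hy hrest
      _ = ((n + 1 : ℕ) + 1) * C := by push_cast; ring

theorem uniformly_proper_neighborhood_estimate_general
    (d_triangle : ∀ x y z, d x z ≤ d x y + d y z) (hδ : 0 < δ)
    (hC : ∀ x y, dist (f x) (f y) ≤ 2 * t + δ → d x y ≤ C) (hab : a ≤ b)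
    (hγ : ContinuousOn γ (Icc a b)) (hfin : BoundedVariationOn γ (Icc a b))
    (hnear : ∀ s ∈ Icc a b, ∃ x, dist (γ s) (f x) ≤ t)
    (hp : dist (γ a) (f p) ≤ t) (hq : dist (γ b) (f q) ≤ t) :
    d p q ≤ ((eVariationOn γ (Icc a b)).toReal / δ + 1) * C := by
  set ℓ := (eVariationOn γ (Icc a b)).toReal with hℓ
  have ht : 0 ≤ t := dist_nonneg.trans hp
  have hC_nonneg : 0 ≤ C := by
    have hpp : d p p ≤ C := hC p p (by rw [dist_self]; positivity)
    linarith [d_triangle p p p]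
  have hvar : eVariationOn γ (Icc a b) < ENNReal.ofReal ((⌊ℓ / δ⌋₊ + 1) * δ) := by
    rw [ENNReal.lt_ofReal_iff_toReal_lt hfin, ← hℓ, ← div_lt_iff₀ hδ]
    exact Nat.lt_floor_add_one _
  calc
    d p q ≤ (⌊ℓ / δ⌋₊ + 1) * C :=
      le_mul_of_eVariationOn_Icc_lt d_triangle hδ hC hab hγ hnear hp hq _ hvar
    _ ≤ (ℓ / δ + 1) * C := by
      gcongr
      exact Nat.floor_le (by positivity)

end CoarseEstimate

/-- **Coarse quasi-isometric embedding estimate.**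

Let `Y` be a metric space and `X ⊆ Y` a subset equipped with its own metric `dX`, uniformly
properly embedded with gauge `F`: for `a, b ∈ X` and `r ≥ 0`, if `d_Y(a,b) ≤ r` then
`dX(a,b) ≤ F r`.  Let `p, q ∈ X` and let `γ` be a continuous path in `Y` from `p` to `q` of
finite length `ℓ`, every point of which lies within distance `t` of `X`.  Then
`dX(p, q) ≤ (ℓ + 1) · F (2 t + 1)`. -/
theorem uniformly_proper_neighborhood_estimate
    {Y : Type*} [MetricSpace Y] (X : Set Y)
    (dX : X → X → ℝ)
    (dX_self : ∀ a : X, dX a a = 0)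
    (dX_symm : ∀ a b : X, dX a b = dX b a)
    (dX_triangle : ∀ a b c : X, dX a c ≤ dX a b + dX b c)
    (F : ℝ → ℝ) (hF_nonneg : ∀ r : ℝ, 0 ≤ r → 0 ≤ F r)
    (hgauge : ∀ (a b : X) (r : ℝ), 0 ≤ r → dist (a : Y) (b : Y) ≤ r → dX a b ≤ F r)
    (p q : X) (γ : ℝ → Y) (hγcont : ContinuousOn γ (Set.Icc 0 1))
    (hγ0 : γ 0 = p) (hγ1 : γ 1 = q)
    (ℓ : ℝ) (hℓ : 0 ≤ ℓ) (hlen : eVariationOn γ (Set.Icc 0 1) = ENNReal.ofReal ℓ)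
    (t : ℝ) (ht : 0 ≤ t)
    (hnear : ∀ s ∈ Set.Icc (0 : ℝ) 1, ∃ x : X, dist (γ s) (x : Y) ≤ t) :
    dX p q ≤ (ℓ + 1) * F (2 * t + 1) := by
  simpa [hlen, hℓ] using uniformly_proper_neighborhood_estimate_general (f := Subtype.val)
    dX_triangle one_pos (fun a b => hgauge a b (2 * t + 1) (by positivity)) zero_le_one hγcont
    (hlen.trans_ne ENNReal.ofReal_ne_top) hnear (by simpa [hγ0]) (by simpa [hγ1])
end
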